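/- For every n ≥ 1 and every degree vector a ∈ ℕ^n, the element k_n(a) ∈ F(n) defined by the recursion k_1 = leaf, k_n(a_1,…,a_n) = Σ_{j=1}^{n−1} (−1)^{a_1+⋯+a_j+j−1} graft(k_j(a_1,…,a_j), k_{n−j}(a_{j+1},…,a_n)), equals the signed sum over all binary trees: k_n(a) = Σ_{t ∈ Y_n} (−1)^{P(t,a)} t, where P(t,a) is the sum over all vertices V of t (root included) of the degrees of the decorated left subtrees of V. -/

import Mathlib

/-- Planar rooted trees with leaves decorated by natural numbers (the degrees of
the decorations). -/
inductive DTree : Type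
  | leaf (a : ℕ) : DTree
  | node (children : List DTree) : DTree

namespace DTree

mutual
  /-- degree: sum of the leaf decorations plus the number of vertices. -/
  def deg : DTree → ℕ
    | leaf a => a
    | node cs => 1 + degList cs
  def degList : List DTree → ℕ
    | [] => 0
    | c :: rest => deg c + degList rest
end

mutual
  /-- `P(t,a)`: the sum, over all vertices `V` of `t` (root included), of the
  degrees of the decorated left (= first-child) subtrees of `V`. -/
  def Pval : DTree → ℕ
    | leaf _ => 0
    | node [] => 0
    | node (c :: rest) => deg c + Pval c + PvalList rest
  def PvalList : List DTree → ℕ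
    | [] => 0
    | c :: rest => Pval c + PvalList rest
end

mutual
  /-- the list of leaf decorations, in planar (left-to-right) order. -/
  def leafLabels : DTree → List ℕ
    | leaf a => [a]
    | node cs => leafLabelsList cs
  def leafLabelsList : List DTree → List ℕ
    | [] => []
    | c :: rest => leafLabels c ++ leafLabelsList rest
end

/-- binary trees: every vertex has exactly two children. -/
inductive IsBinary : DTree → Prop
  | leaf (a : ℕ) : IsBinary (leaf a)
  | node (t₁ t₂ : DTree) : IsBinary t₁ → IsBinary t₂ → IsBinary (node [t₁, t₂])

end DTree

/-- grafting, extended bilinearly: on basis trees,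
`graftL t₁ t₂` is the binary tree whose root has ordered children `t₁, t₂`. -/
noncomputable def graftL : (DTree →₀ ℚ) →ₗ[ℚ] (DTree →₀ ℚ) →ₗ[ℚ] (DTree →₀ ℚ) :=
  Finsupp.lsum ℚ fun t₁ => LinearMap.toSpanSingleton ℚ ((DTree →₀ ℚ) →ₗ[ℚ] (DTree →₀ ℚ))
    (Finsupp.lsum ℚ fun t₂ => LinearMap.toSpanSingleton ℚ (DTree →₀ ℚ)
      (Finsupp.single (DTree.node [t₁, t₂]) 1))

/-- the element `k_n[a_1,…,a_n]`, defined by the recursion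
`k_1[a] = leaf a`,
`k_n[a] = Σ_{j=1}^{n-1} (−1)^{a_1+⋯+a_j+j−1} graft(k_j[a_{≤j}], k_{n−j}[a_{>j}])`. -/
noncomputable def kEl : List ℕ → (DTree →₀ ℚ)
  | [] => 0
  | [a] => Finsupp.single (DTree.leaf a) 1
  | a :: b :: rest =>
      ∑ j ∈ (Finset.Ico 1 (a :: b :: rest).length).attach,
        ((-1 : ℚ) ^ (((a :: b :: rest).take j.1).sum + j.1 - 1)) •
          graftL (kEl ((a :: b :: rest).take j.1)) (kEl ((a :: b :: rest).drop j.1))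
termination_by l => l.length
decreasing_by
  · have hj := Finset.mem_Ico.mp j.2
    simp only [List.length_take, List.length_drop, List.length_cons] at hj ⊢
    omega
  · have hj := Finset.mem_Ico.mp j.2
    simp only [List.length_take, List.length_drop, List.length_cons] at hj ⊢
    omega

/-!
A binary tree has one vertex fewer than it has leaves, so its degree depends only on its leaf
labels: `(-1) ^ (a₁ + ⋯ + aⱼ + j - 1)` is the sign of the degree of any left subtree labelled
`a₁, …, aⱼ`. A binary tree `node [t₁, t₂]` labelled `l` arises from exactly one term of the
recursion for `k`, the one that cuts `l` after the leaves of `t₁`, so its coefficient is the product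
of these signs over all its vertices, which is `(-1) ^ P`.
-/

namespace DTree

@[simp]
theorem deg_node_pair (t₁ t₂ : DTree) : deg (node [t₁, t₂]) = 1 + (deg t₁ + deg t₂) := by
  simp only [deg, degList, add_zero]

@[simp]
theorem Pval_node_pair (t₁ t₂ : DTree) :
    Pval (node [t₁, t₂]) = deg t₁ + Pval t₁ + Pval t₂ := by
  simp only [Pval, PvalList, add_zero]

@[simp]
theorem leafLabels_node_pair (t₁ t₂ : DTree) :
    leafLabels (node [t₁, t₂]) = leafLabels t₁ ++ leafLabels t₂ := by
  simp only [leafLabels, leafLabelsList, List.append_nil]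

theorem IsBinary.leafLabels_length_pos {t : DTree} (ht : t.IsBinary) :
    0 < t.leafLabels.length := by
  induction ht with
  | leaf a => simp [leafLabels]
  | node t₁ t₂ _ _ ih₁ _ => simp only [leafLabels_node_pair, List.length_append]; omega

theorem IsBinary.deg_add_one {t : DTree} (ht : t.IsBinary) :
    t.deg + 1 = t.leafLabels.sum + t.leafLabels.length := by
  induction ht with
  | leaf a => simp [leafLabels, deg]
  | node t₁ t₂ _ _ ih₁ ih₂ =>
    simp only [deg_node_pair, leafLabels_node_pair, List.sum_append, List.length_append]
    omega

end DTree

open DTree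

theorem graftL_single_single (t₁ t₂ : DTree) (a b : ℚ) :
    graftL (Finsupp.single t₁ a) (Finsupp.single t₂ b) =
      Finsupp.single (node [t₁, t₂]) (a * b) := by
  simp [graftL]

theorem graftL_apply_node_pair (x y : DTree →₀ ℚ) (t₁ t₂ : DTree) :
    graftL x y (node [t₁, t₂]) = x t₁ * y t₂ := by
  classical
  suffices h : graftL.compr₂ (Finsupp.lapply (node [t₁, t₂])) =
      (LinearMap.mul ℚ ℚ).compl₁₂ (Finsupp.lapply t₁) (Finsupp.lapply t₂) from
    LinearMap.congr_fun₂ h x y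
  ext s₁ s₂
  by_cases h₁ : s₁ = t₁ <;> by_cases h₂ : s₂ = t₂ <;>
    simp [graftL_single_single, h₁, h₂]

theorem exists_eq_node_pair_of_graftL_apply_ne_zero {x y : DTree →₀ ℚ} {t : DTree}
    (h : graftL x y t ≠ 0) : ∃ t₁ t₂, t = node [t₁, t₂] := by
  contrapose! h
  suffices h₀ : graftL.compr₂ (Finsupp.lapply t : (DTree →₀ ℚ) →ₗ[ℚ] ℚ) = 0 from
    LinearMap.congr_fun₂ h₀ x y
  ext s₁ s₂
  simp [graftL_single_single, (h s₁ s₂).symm]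

theorem kEl_eq_sum {l : List ℕ} (hl : 2 ≤ l.length) :
    kEl l = ∑ j ∈ Finset.Ico 1 l.length,
      (-1 : ℚ) ^ ((l.take j).sum + j - 1) • graftL (kEl (l.take j)) (kEl (l.drop j)) := by
  match l, hl with
  | a :: b :: rest, _ =>
    rw [kEl]
    exact Finset.sum_attach (Finset.Ico 1 (a :: b :: rest).length) fun j =>
      (-1 : ℚ) ^ (((a :: b :: rest).take j).sum + j - 1) •
        graftL (kEl ((a :: b :: rest).take j)) (kEl ((a :: b :: rest).drop j))

theorem kEl_apply_node_pair {l : List ℕ} (hl : 2 ≤ l.length) (t₁ t₂ : DTree) :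
    kEl l (node [t₁, t₂]) = ∑ j ∈ Finset.Ico 1 l.length,
      (-1 : ℚ) ^ ((l.take j).sum + j - 1) * (kEl (l.take j) t₁ * kEl (l.drop j) t₂) := by
  simp only [kEl_eq_sum hl, Finsupp.finsetSum_apply, Finsupp.smul_apply, smul_eq_mul,
    graftL_apply_node_pair]

theorem exists_eq_node_pair_of_kEl_apply_ne_zero {l : List ℕ} (hl : 2 ≤ l.length) {t : DTree}
    (h : kEl l t ≠ 0) : ∃ t₁ t₂, t = node [t₁, t₂] := by
  rw [kEl_eq_sum hl, Finsupp.finsetSum_apply] at h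
  obtain ⟨j, -, hj⟩ := Finset.exists_ne_zero_of_sum_ne_zero h
  exact exists_eq_node_pair_of_graftL_apply_ne_zero (right_ne_zero_of_mul hj)

theorem isBinary_and_leafLabels_eq_of_kEl_apply_ne_zero {l : List ℕ} {t : DTree}
    (h : kEl l t ≠ 0) : t.IsBinary ∧ t.leafLabels = l := by
  induction l using kEl.induct generalizing t with
  | case1 => simp [kEl] at h
  | case2 a =>
    obtain rfl : t = leaf a := by
      rw [kEl] at h
      exact (Finsupp.single_apply_ne_zero.mp h).1
    exact ⟨.leaf a, by rw [leafLabels]⟩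
  | case3 a b rest ih_take ih_drop =>
    have hlen : 2 ≤ (a :: b :: rest).length := by simp
    obtain ⟨t₁, t₂, rfl⟩ := exists_eq_node_pair_of_kEl_apply_ne_zero hlen h
    rw [kEl_apply_node_pair hlen] at h
    obtain ⟨j, hj, hterm⟩ := Finset.exists_ne_zero_of_sum_ne_zero h
    have hfactors := right_ne_zero_of_mul hterm
    obtain ⟨hbin₁, hlabels₁⟩ := ih_take ⟨j, hj⟩ (left_ne_zero_of_mul hfactors)
    obtain ⟨hbin₂, hlabels₂⟩ := ih_drop ⟨j, hj⟩ (right_ne_zero_of_mul hfactors)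
    exact ⟨.node t₁ t₂ hbin₁ hbin₂, by
      rw [leafLabels_node_pair, hlabels₁, hlabels₂, List.take_append_drop]⟩

theorem kEl_leafLabels_append_apply_node_pair {t₁ : DTree} (ht₁ : 0 < t₁.leafLabels.length)
    {l : List ℕ} (hl : 0 < l.length) (t₂ : DTree) :
    kEl (t₁.leafLabels ++ l) (node [t₁, t₂]) =
      (-1 : ℚ) ^ (t₁.leafLabels.sum + t₁.leafLabels.length - 1) *
        (kEl t₁.leafLabels t₁ * kEl l t₂) := by
  have hlen : (t₁.leafLabels ++ l).length = t₁.leafLabels.length + l.length :=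
    List.length_append
  rw [kEl_apply_node_pair (by omega), Finset.sum_eq_single_of_mem t₁.leafLabels.length
    (Finset.mem_Ico.mpr (by omega)), List.take_left, List.drop_left]
  intro j hj hne
  have hvanish : kEl ((t₁.leafLabels ++ l).take j) t₁ = 0 := by
    by_contra h
    have hcut := congrArg List.length (isBinary_and_leafLabels_eq_of_kEl_apply_ne_zero h).2
    rw [List.length_take_of_le (Finset.mem_Ico.mp hj).2.le] at hcut
    exact hne hcut.symm
  rw [hvanish, zero_mul, mul_zero]

theorem kEl_leafLabels_apply_of_isBinary {t : DTree} (ht : t.IsBinary) :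
    kEl t.leafLabels t = (-1 : ℚ) ^ t.Pval := by
  induction ht with
  | leaf a => simp [leafLabels, kEl, Pval]
  | node t₁ t₂ ht₁ ht₂ ih₁ ih₂ =>
    have hsign : t₁.leafLabels.sum + t₁.leafLabels.length - 1 = t₁.deg := by
      rw [← ht₁.deg_add_one, Nat.add_sub_cancel]
    calc kEl (node [t₁, t₂]).leafLabels (node [t₁, t₂])
      _ = (-1 : ℚ) ^ t₁.deg * (kEl t₁.leafLabels t₁ * kEl t₂.leafLabels t₂) := by
        rw [leafLabels_node_pair, kEl_leafLabels_append_apply_node_pair ht₁.leafLabels_length_pos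
          ht₂.leafLabels_length_pos, hsign]
      _ = (-1 : ℚ) ^ (node [t₁, t₂]).Pval := by
        rw [ih₁, ih₂, Pval_node_pair, pow_add, pow_add, mul_assoc]

/-- the closed form of `k_n`:
`k_n[a] = Σ_{t ∈ Y_n} (−1)^{P(t,a)} t`, the signed sum over all binary trees
with `n` leaves decorated by `a`; stated coefficientwise in the free vector
space on decorated planar rooted trees. -/
theorem stmt_14 (l : List ℕ) (hl : l ≠ []) (t : DTree) :
    (DTree.IsBinary t ∧ DTree.leafLabels t = l → kEl l t = (-1 : ℚ) ^ DTree.Pval t) ∧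
    (¬ (DTree.IsBinary t ∧ DTree.leafLabels t = l) → kEl l t = 0) := by
  constructor
  · rintro ⟨ht, rfl⟩
    exact kEl_leafLabels_apply_of_isBinary ht
  · exact fun ht => by_contra fun h => ht (isBinary_and_leafLabels_eq_of_kEl_apply_ne_zero h)
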